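/- The set of resonant values for (D,n) is exactly the set { R(q) : q ∈ Q, q ≠ 0 }; that is, { δ ∈ ℝ : there exists q ∈ Q, q ≠ 0, with α(D−q;n,δ) = α(D;n,δ) } = { [ |q|(2(m+1)(n+1)+2d−|q|) + Σ_{i=1}^m (2 d_i q_i − q_i² − 2 i q_i) ] / (2 |q| (m+1)) : q ∈ Q, q ≠ 0 }. -/

import Mathlib

/-! With `E = |e|`, the double sum in the Casimir eigenvalue collapses and
`2 (m+1) α(e;n,δ) = m (m+1) (n-δ) (n+1-δ) + E² + 2 (m+1) (n+1-δ) E + ∑ (eᵢ² - 2 i eᵢ)`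
(`casimirEigenvalue_eq`). The term quadratic in `δ` does not depend on `e`, so the difference
`α(D) - α(D-q)` is affine in `δ` with slope `-|q|` (`casimirEigenvalue_sub`). For `q ≠ 0` it
therefore has a unique zero, namely `R(q)`, and the two sets agree label by label. -/

open Finset

/-- The eigenvalue by which the Casimir operator of the projective algebra
`sl(m+1,ℝ)` acts on sections of the bundle associated to the irreducible
`GL(m,ℝ)`-representation characterized by the Young diagram `e` (indexed by
`1, …, m`), the integer `n` and the weight `δ`. -/
noncomputable def casimirEigenvalue (m : ℕ) (n : ℤ) (e : ℕ → ℕ) (δ : ℝ) : ℝ :=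
  ((m * ((n : ℝ) - δ) + ∑ i ∈ Finset.Icc 1 m, (e i : ℝ)) *
      (m * ((n : ℝ) + 1 - δ) + ∑ i ∈ Finset.Icc 1 m, (e i : ℝ))) / (2 * m) +
    (1 / (2 * m * (m + 1))) *
      ∑ i ∈ Finset.Icc 1 m, ∑ j ∈ Finset.Icc 1 m,
        ((e i : ℝ) * (e j : ℝ) * (m * (if i = j then (1 : ℝ) else 0) - 1) +
          2 * (e i : ℝ) * ((m : ℝ) - (j : ℝ)) * (m * (if i = j then (1 : ℝ) else 0) - 1))

/-- The resonance value `R(q)` attached to a nonzero label `q` of the branching law,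
for the Young diagram `d` (of depth at most `m-1`) and the integer `n`. -/
noncomputable def resonance (m : ℕ) (n : ℤ) (d q : ℕ → ℕ) : ℝ :=
  ((∑ i ∈ Finset.Icc 1 m, (q i : ℝ)) *
      (2 * ((m : ℝ) + 1) * ((n : ℝ) + 1) + 2 * (∑ i ∈ Finset.Icc 1 (m - 1), (d i : ℝ)) -
        ∑ i ∈ Finset.Icc 1 m, (q i : ℝ)) +
    ∑ i ∈ Finset.Icc 1 m,
      (2 * (d i : ℝ) * (q i : ℝ) - (q i : ℝ) ^ 2 - 2 * (i : ℝ) * (q i : ℝ))) /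
    (2 * (∑ i ∈ Finset.Icc 1 m, (q i : ℝ)) * ((m : ℝ) + 1))

lemma sum_Icc_sub_cast (m : ℕ) :
    ∑ j ∈ Finset.Icc 1 m, ((m : ℝ) - (j : ℝ)) = m * (m - 1) / 2 := by
  have h : ∑ j ∈ Finset.Icc 1 m, (j : ℝ) = m * (m + 1) / 2 := by
    induction m with
    | zero => simp
    | succ k ih =>
      rw [Finset.sum_Icc_succ_top (by omega), ih]
      push_cast
      ring
  rw [Finset.sum_sub_distrib, h]
  simp
  ring

/-- Closed form of the eigenvalue: the double sum reduces to power sums of `e`, and the factor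
`m` in the denominator cancels. -/
lemma casimirEigenvalue_eq (m : ℕ) (hm : 2 ≤ m) (n : ℤ) (e : ℕ → ℕ) (δ : ℝ) :
    casimirEigenvalue m n e δ =
      (m * (m + 1) * (n - δ) * (n + 1 - δ) + (∑ i ∈ Finset.Icc 1 m, (e i : ℝ)) ^ 2 +
        2 * (m + 1) * (n + 1 - δ) * ∑ i ∈ Finset.Icc 1 m, (e i : ℝ) +
        ∑ i ∈ Finset.Icc 1 m, ((e i : ℝ) ^ 2 - 2 * i * e i)) / (2 * (m + 1)) := by
  have hm0 : (m : ℝ) ≠ 0 := by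
    have : m ≠ 0 := by omega
    exact_mod_cast this
  have hm1 : (m : ℝ) + 1 ≠ 0 := by positivity
  have inner : ∀ i ∈ Finset.Icc 1 m, ∑ j ∈ Finset.Icc 1 m,
        ((e i : ℝ) * (e j : ℝ) * (m * (if i = j then (1 : ℝ) else 0) - 1) +
          2 * (e i : ℝ) * ((m : ℝ) - (j : ℝ)) * (m * (if i = j then (1 : ℝ) else 0) - 1)) =
      m * ((e i : ℝ) ^ 2 - 2 * i * e i) +
        (m * (m + 1) - ∑ j ∈ Finset.Icc 1 m, (e j : ℝ)) * e i := by
    intro i hi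
    have split : ∀ j ∈ Finset.Icc 1 m,
        ((e i : ℝ) * (e j : ℝ) * (m * (if i = j then (1 : ℝ) else 0) - 1) +
          2 * (e i : ℝ) * ((m : ℝ) - (j : ℝ)) * (m * (if i = j then (1 : ℝ) else 0) - 1)) =
        (if i = j then (m : ℝ) * ((e i : ℝ) * e j + 2 * e i * (m - j)) else 0) -
          e i * e j - 2 * e i * ((m : ℝ) - j) := by
      intro j _
      split_ifs <;> ring
    rw [Finset.sum_congr rfl split, Finset.sum_sub_distrib, Finset.sum_sub_distrib,
      Finset.sum_ite_eq, if_pos hi, ← Finset.mul_sum, ← Finset.mul_sum, sum_Icc_sub_cast]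
    ring
  unfold casimirEigenvalue
  rw [Finset.sum_congr rfl inner, Finset.sum_add_distrib, ← Finset.mul_sum, ← Finset.mul_sum]
  field_simp
  ring

/-- The difference of eigenvalues is `|q| (R(q) - δ)`. The bound `q ≤ d` makes the truncated
subtraction `d i - q i` a genuine one, and `d m = 0` identifies the size of the diagram, a sum
over `m - 1` rows, with the sum over `m` rows. -/
lemma casimirEigenvalue_sub (m : ℕ) (hm : 2 ≤ m) (n : ℤ) (d q : ℕ → ℕ) (hdm : d m = 0)
    (hq : ∀ i ∈ Finset.Icc 1 m, q i ≤ d i) (hq0 : ∑ i ∈ Finset.Icc 1 m, (q i : ℝ) ≠ 0) (δ : ℝ) :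
    casimirEigenvalue m n d δ - casimirEigenvalue m n (fun i => d i - q i) δ =
      (∑ i ∈ Finset.Icc 1 m, (q i : ℝ)) * (resonance m n d q - δ) := by
  have hm1 : (m : ℝ) + 1 ≠ 0 := by positivity
  have hsize : ∑ i ∈ Finset.Icc 1 (m - 1), (d i : ℝ) = ∑ i ∈ Finset.Icc 1 m, (d i : ℝ) := by
    obtain ⟨k, rfl⟩ : ∃ k, m = k + 1 := ⟨m - 1, by omega⟩
    rw [Finset.sum_Icc_succ_top (by omega), hdm]
    simp
  have h1 : ∑ i ∈ Finset.Icc 1 m, ((d i - q i : ℕ) : ℝ) =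
      ∑ i ∈ Finset.Icc 1 m, (d i : ℝ) - ∑ i ∈ Finset.Icc 1 m, (q i : ℝ) := by
    rw [← Finset.sum_sub_distrib]
    exact Finset.sum_congr rfl fun i hi => Nat.cast_sub (hq i hi)
  have h2 : ∑ i ∈ Finset.Icc 1 m, (((d i - q i : ℕ) : ℝ) ^ 2 - 2 * i * ((d i - q i : ℕ) : ℝ)) =
      ∑ i ∈ Finset.Icc 1 m, ((d i : ℝ) ^ 2 - 2 * i * d i) -
        ∑ i ∈ Finset.Icc 1 m,
          (2 * (d i : ℝ) * (q i : ℝ) - (q i : ℝ) ^ 2 - 2 * (i : ℝ) * (q i : ℝ)) := by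
    rw [← Finset.sum_sub_distrib]
    refine Finset.sum_congr rfl fun i hi => ?_
    rw [Nat.cast_sub (hq i hi)]
    ring
  rw [casimirEigenvalue_eq m hm, casimirEigenvalue_eq m hm, h1, h2]
  unfold resonance
  rw [hsize]
  field_simp
  ring

/-- The set of resonant values for `(D,n)` is exactly `{ R(q) : q ∈ Q, q ≠ 0 }`. -/
theorem resonant_values_eq (m : ℕ) (hm : 2 ≤ m) (n : ℤ) (d : ℕ → ℕ)
    (hd_anti : ∀ i, 1 ≤ i → i < m → d (i + 1) ≤ d i)
    (hdm : d m = 0) (hdm1 : d (m + 1) = 0) :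
    {δ : ℝ | ∃ q : ℕ → ℕ, (∀ i, 1 ≤ i → i ≤ m → q i ≤ d i - d (i + 1)) ∧
        (∃ i ∈ Finset.Icc 1 m, q i ≠ 0) ∧
        casimirEigenvalue m n (fun i => d i - q i) δ = casimirEigenvalue m n d δ} =
      {x : ℝ | ∃ q : ℕ → ℕ, (∀ i, 1 ≤ i → i ≤ m → q i ≤ d i - d (i + 1)) ∧
        (∃ i ∈ Finset.Icc 1 m, q i ≠ 0) ∧
        x = resonance m n d q} := by
  ext δ
  refine exists_congr fun q => and_congr_right fun hq => and_congr_right fun ⟨i, hi, hqi⟩ => ?_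
  have hq0 : ∑ i ∈ Finset.Icc 1 m, (q i : ℝ) ≠ 0 := by
    have : 0 < ∑ i ∈ Finset.Icc 1 m, q i :=
      Finset.sum_pos' (fun _ _ => Nat.zero_le _) ⟨i, hi, Nat.pos_of_ne_zero hqi⟩
    exact_mod_cast this.ne'
  have hle : ∀ i ∈ Finset.Icc 1 m, q i ≤ d i := fun i hi =>
    (hq i (Finset.mem_Icc.1 hi).1 (Finset.mem_Icc.1 hi).2).trans (Nat.sub_le _ _)
  have key := casimirEigenvalue_sub m hm n d q hdm hle hq0 δ
  rw [eq_comm, ← sub_eq_zero, key, mul_eq_zero, or_iff_right hq0, sub_eq_zero, eq_comm]
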